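/- arXiv:2502.11323 — 3 statements merged into one kernel-verified Lean document; each statement's English description precedes it below -/
import Mathlib

section
/- Define Err₊*(π, m, δ) := Φ(−ρ*(π,m,δ)·m − β₀*(π,m,δ)), where ρ*(π,m,δ) is the unique ρ ∈ (0,1) satisfying π·δ·g(ρ/(2πmδ)) + (1−π)·δ·g(ρ/(2(1−π)mδ)) = 1 − ρ² and β₀*(π,m,δ) := (1/2)·(g₁⁻¹(ρ*/(2(1−π)mδ)) − g₁⁻¹(ρ*/(2πmδ))). Then Err₊* is strictly decreasing in π on (0,1/2) (for fixed m, δ), strictly decreasing in m on (0,∞) (for fixed π ∈ (0,1/2), δ), and strictly decreasing in δ on (0,∞) (for fixed π ∈ (0,1/2), m). -/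
open MeasureTheory

/-- The standard normal density. -/
noncomputable def normPDF (x : ℝ) : ℝ := Real.exp (-x ^ 2 / 2) / Real.sqrt (2 * Real.pi)

/-- The standard normal cumulative distribution function. -/
noncomputable def normCDF (x : ℝ) : ℝ := ∫ t in Set.Iic x, normPDF t

/-- `g₁(x) = x·Φ(x) + φ(x)`, equal to `E[(Z+x)₊]` for standard normal `Z`. -/
noncomputable def g1 (x : ℝ) : ℝ := x * normCDF x + normPDF x

/-- `g₂(x) = (x²+1)·Φ(x) + x·φ(x)`, equal to `E[(Z+x)₊²]` for standard normal `Z`. -/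
noncomputable def g2 (x : ℝ) : ℝ := (x ^ 2 + 1) * normCDF x + x * normPDF x

/-- The inverse of `g₁` (on its range `(0,∞)`). -/
noncomputable def g1inv : ℝ → ℝ := Function.invFun g1

/-- `g = g₂ ∘ g₁⁻¹`. -/
noncomputable def gfn (t : ℝ) : ℝ := g2 (g1inv t)

/-!
Put `s = ρ / (2mδ)`, so that the arguments of `g` in the fixed-point equation are `s / π` and
`s / (1 - π)`. With `γ(t) = g(t) / t` the equation becomes

  `ρ * (γ(s / π) + γ(s / (1 - π))) = 2m(1 - ρ²)`,

and the margin to be compared is `ρm + (g₁⁻¹(s / (1 - π)) - g₁⁻¹(s / π)) / 2`.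

Log-concavity passes to antiderivatives vanishing at `-∞`, hence along the chain
`φ, Φ, g₁, g₂ / 2`. It makes `γ` and `g₁⁻¹ - γ` monotone, and it makes `g₁⁻¹(kt) - g₁⁻¹(t)`
monotone in `t` for `k ≥ 1`.

When `m` or `δ` grows, `s` decreases, so `γ` decreases and `ρ` grows, while the intercept does not
decrease because `1 - π ≥ π`. When `π` grows, `s / π` decreases and `s / (1 - π)` increases. If `ρ`
does not decrease, neither summand of the margin does; otherwise solving the equation for `ρm`
writes twice the margin as `2m / ρ - (g₁⁻¹ + γ)(s / π) + (g₁⁻¹ - γ)(s / (1 - π))`, where every term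
grows.
-/

open Filter Topology Set

theorem hasDerivAt_integral_Iic {f : ℝ → ℝ} (hf : Integrable f) (hc : Continuous f) (x : ℝ) :
    HasDerivAt (fun y => ∫ t in Iic y, f t) (f x) x := by
  have hsplit (y : ℝ) : ∫ t in Iic y, f t = (∫ t in Iic 0, f t) + ∫ t in (0 : ℝ)..y, f t := by
    rw [← intervalIntegral.integral_Iic_sub_Iic hf.integrableOn hf.integrableOn, add_sub_cancel]
  exact ((hc.integral_hasStrictDerivAt 0 x).hasDerivAt.const_add _).congr_of_eventuallyEq
    (.of_forall hsplit)

theorem pos_of_hasDerivAt_pos_of_tendsto_atBot {f f' l : ℝ → ℝ} {x : ℝ}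
    (hf : ∀ y ≤ x, HasDerivAt f (f' y) y) (hf' : ∀ y < x, 0 < f' y)
    (hlf : ∀ y, l y ≤ f y) (hl : Tendsto l atBot (𝓝 0)) : 0 < f x := by
  have hmono : StrictMonoOn f (Iic x) := by
    refine strictMonoOn_of_hasDerivWithinAt_pos (f' := f') (convex_Iic x)
      (fun y hy => (hf y hy).continuousAt.continuousWithinAt) ?_ ?_ <;> rw [interior_Iic]
    exacts [fun y hy => (hf y (le_of_lt hy)).hasDerivWithinAt, hf']
  have hpred : x - 1 ∈ Iic x := sub_le_self x zero_le_one
  have hnonneg : 0 ≤ f (x - 1) := by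
    refine le_of_tendsto hl ?_
    filter_upwards [eventually_le_atBot (x - 1)] with y hy
    exact (hlf y).trans (hmono.monotoneOn (hy.trans hpred) hpred hy)
  exact hnonneg.trans_lt (hmono hpred self_mem_Iic (sub_one_lt x))

/- With `e = f'`, `f = F'` and `F = H'`, the inequality `e * F < f ^ 2` is the strict log-concavity
of `F`, and the conclusion is that of `H`. The proof integrates
`(F ^ 2 / f - H)' = F * (f ^ 2 - e * F) / f ^ 2`. -/
theorem mul_lt_sq_of_hasDerivAt_of_mul_lt_sq {e f F H : ℝ → ℝ}
    (hf : ∀ x, HasDerivAt f (e x) x) (hF : ∀ x, HasDerivAt F (f x) x)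
    (hH : ∀ x, HasDerivAt H (F x) x) (hfpos : ∀ x, 0 < f x) (hFpos : ∀ x, 0 < F x)
    (hlog : ∀ x, e x * F x < f x ^ 2) (hHlim : Tendsto H atBot (𝓝 0)) (x : ℝ) :
    f x * H x < F x ^ 2 := by
  have hderiv (y : ℝ) : HasDerivAt (fun z => F z ^ 2 / f z - H z)
      (F y * (f y ^ 2 - e y * F y) / f y ^ 2) y := by
    refine ((((hF y).pow 2).div (hf y) (hfpos y).ne').sub (hH y)).congr_deriv ?_
    have := (hfpos y).ne'
    simp only [Pi.pow_apply]
    field_simp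
    ring
  have hpos : 0 < F x ^ 2 / f x - H x := by
    refine pos_of_hasDerivAt_pos_of_tendsto_atBot (f := fun y => F y ^ 2 / f y - H y)
      (l := fun y => -H y) (fun y _ => hderiv y)
      (fun y _ => ?_) (fun y => ?_) (by simpa only [neg_zero] using hHlim.neg)
    · exact div_pos (mul_pos (hFpos y) (sub_pos.2 (hlog y))) (pow_pos (hfpos y) 2)
    · have : 0 ≤ F y ^ 2 / f y := div_nonneg (sq_nonneg _) (hfpos y).le
      linarith
  rwa [sub_pos, lt_div_iff₀' (hfpos x)] at hpos

theorem antitone_comp_add_const_div {f f' : ℝ → ℝ} (hf : ∀ x, HasDerivAt f (f' x) x)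
    (hpos : ∀ x, 0 < f x) (hlog : Antitone fun x => f' x / f x) {d : ℝ} (hd : 0 ≤ d) :
    Antitone fun x => f (x + d) / f x := by
  refine antitone_of_hasDerivAt_nonpos
    (fun x => ((hf (x + d)).comp_add_const x d).div (hf x) (hpos x).ne') fun x => ?_
  have hle : f' (x + d) / f (x + d) ≤ f' x / f x := hlog (le_add_of_nonneg_right hd)
  rw [div_le_div_iff₀ (hpos _) (hpos _)] at hle
  exact div_nonpos_of_nonpos_of_nonneg (by linarith) (sq_nonneg _)

theorem normPDF_pos (x : ℝ) : 0 < normPDF x := by unfold normPDF; positivity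

theorem continuous_normPDF : Continuous normPDF := by unfold normPDF; fun_prop

theorem normPDF_eq_inv_sqrt_mul_exp (x : ℝ) :
    normPDF x = (√(2 * Real.pi))⁻¹ * Real.exp (-(1 / 2) * x ^ 2) := by
  rw [normPDF, div_eq_inv_mul, show -x ^ 2 / 2 = -(1 / 2) * x ^ 2 by ring]

theorem integrable_normPDF : Integrable normPDF := by
  rw [funext normPDF_eq_inv_sqrt_mul_exp]
  exact (integrable_exp_neg_mul_sq one_half_pos).const_mul _

theorem hasDerivAt_normPDF (x : ℝ) : HasDerivAt normPDF (-x * normPDF x) x := by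
  rw [funext normPDF_eq_inv_sqrt_mul_exp]
  refine (((hasDerivAt_pow 2 x).const_mul (-(1 / 2))).exp.const_mul _).congr_deriv ?_
  simp only [Nat.cast_ofNat]
  ring

theorem tendsto_pow_mul_normPDF_atBot (k : ℕ) :
    Tendsto (fun x => x ^ k * normPDF x) atBot (𝓝 0) := by
  have h := ((tendsto_rpow_abs_mul_exp_neg_mul_sq_cocompact one_half_pos k).mono_left
    atBot_le_cocompact).const_mul (√(2 * Real.pi))⁻¹
  rw [mul_zero] at h
  refine squeeze_zero_norm (fun x => le_of_eq ?_) h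
  rw [norm_mul, norm_pow, Real.norm_of_nonneg (normPDF_pos x).le, Real.norm_eq_abs,
    normPDF_eq_inv_sqrt_mul_exp, Real.rpow_natCast]
  ring

theorem tendsto_normPDF_atBot : Tendsto normPDF atBot (𝓝 0) := by
  simpa only [pow_zero, one_mul] using tendsto_pow_mul_normPDF_atBot 0

theorem hasDerivAt_normCDF (x : ℝ) : HasDerivAt normCDF (normPDF x) x :=
  hasDerivAt_integral_Iic integrable_normPDF continuous_normPDF x

theorem strictMono_normCDF : StrictMono normCDF :=
  strictMono_of_hasDerivAt_pos hasDerivAt_normCDF normPDF_pos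

theorem tendsto_normCDF_atBot : Tendsto normCDF atBot (𝓝 0) :=
  tendsto_integral_Iic_zero tendsto_id

theorem normCDF_pos (x : ℝ) : 0 < normCDF x :=
  pos_of_hasDerivAt_pos_of_tendsto_atBot (fun y _ => hasDerivAt_normCDF y)
    (fun y _ => normPDF_pos y) (fun _ => le_rfl) tendsto_normCDF_atBot

theorem normCDF_lt_normPDF {x : ℝ} (hx : x ≤ -1) : normCDF x < normPDF x := by
  refine sub_pos.1 (pos_of_hasDerivAt_pos_of_tendsto_atBot (f := fun y => normPDF y - normCDF y)
    (fun y _ => (hasDerivAt_normPDF y).sub (hasDerivAt_normCDF y)) (fun y hy => ?_)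
    (fun _ => le_rfl) ?_)
  · nlinarith [normPDF_pos y]
  · simpa only [sub_zero] using tendsto_normPDF_atBot.sub tendsto_normCDF_atBot

theorem tendsto_pow_mul_normCDF_atBot (k : ℕ) :
    Tendsto (fun x => x ^ k * normCDF x) atBot (𝓝 0) := by
  refine squeeze_zero_norm' ?_
    (tendsto_zero_iff_norm_tendsto_zero.1 (tendsto_pow_mul_normPDF_atBot k))
  filter_upwards [eventually_le_atBot (-1)] with x hx
  rw [norm_mul, norm_mul, Real.norm_of_nonneg (normCDF_pos x).le,
    Real.norm_of_nonneg (normPDF_pos x).le]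
  exact mul_le_mul_of_nonneg_left (normCDF_lt_normPDF hx).le (norm_nonneg _)

theorem hasDerivAt_g1 (x : ℝ) : HasDerivAt g1 (normCDF x) x := by
  refine HasDerivAt.congr_deriv (f := g1)
    (((hasDerivAt_id x).mul (hasDerivAt_normCDF x)).add (hasDerivAt_normPDF x)) ?_
  simp only [id_eq]
  ring

theorem hasDerivAt_g2 (x : ℝ) : HasDerivAt g2 (2 * g1 x) x := by
  refine HasDerivAt.congr_deriv (f := g2) ((((hasDerivAt_pow 2 x).add_const 1).mul
    (hasDerivAt_normCDF x)).add ((hasDerivAt_id x).mul (hasDerivAt_normPDF x))) ?_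
  simp only [id_eq, g1, Nat.cast_ofNat]
  ring

theorem tendsto_g1_atBot : Tendsto g1 atBot (𝓝 0) := by
  simpa only [pow_one, add_zero] using!
    (tendsto_pow_mul_normCDF_atBot 1).add tendsto_normPDF_atBot

theorem tendsto_g2_atBot : Tendsto g2 atBot (𝓝 0) := by
  have h := ((tendsto_pow_mul_normCDF_atBot 2).add tendsto_normCDF_atBot).add
    (tendsto_pow_mul_normPDF_atBot 1)
  simp only [add_zero] at h
  exact h.congr fun x => by rw [g2]; ring

theorem strictMono_g1 : StrictMono g1 :=
  strictMono_of_hasDerivAt_pos hasDerivAt_g1 normCDF_pos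

theorem g1_pos (x : ℝ) : 0 < g1 x :=
  pos_of_hasDerivAt_pos_of_tendsto_atBot (fun y _ => hasDerivAt_g1 y) (fun y _ => normCDF_pos y)
    (fun _ => le_rfl) tendsto_g1_atBot

theorem g2_pos (x : ℝ) : 0 < g2 x :=
  pos_of_hasDerivAt_pos_of_tendsto_atBot (fun y _ => hasDerivAt_g2 y)
    (fun y _ => mul_pos two_pos (g1_pos y)) (fun _ => le_rfl) tendsto_g2_atBot

theorem neg_mul_normPDF_mul_normCDF_lt_sq (x : ℝ) :
    -x * normPDF x * normCDF x < normPDF x ^ 2 := by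
  have h := mul_pos (normPDF_pos x) (g1_pos x)
  rw [g1] at h
  linarith

theorem normPDF_mul_g1_lt_sq (x : ℝ) : normPDF x * g1 x < normCDF x ^ 2 :=
  mul_lt_sq_of_hasDerivAt_of_mul_lt_sq hasDerivAt_normPDF hasDerivAt_normCDF hasDerivAt_g1
    normPDF_pos normCDF_pos neg_mul_normPDF_mul_normCDF_lt_sq tendsto_g1_atBot x

theorem normCDF_mul_g2_div_two_lt_sq (x : ℝ) : normCDF x * (g2 x / 2) < g1 x ^ 2 := by
  refine mul_lt_sq_of_hasDerivAt_of_mul_lt_sq (H := fun y => g2 y / 2) hasDerivAt_normCDF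
    hasDerivAt_g1 (fun y => ?_) normCDF_pos g1_pos normPDF_mul_g1_lt_sq ?_ x
  · exact ((hasDerivAt_g2 y).div_const 2).congr_deriv (mul_div_cancel_left₀ _ two_ne_zero)
  · simpa only [zero_div] using tendsto_g2_atBot.div_const 2

theorem sq_g1_lt_g2_mul_normCDF (x : ℝ) : g1 x ^ 2 < g2 x * normCDF x := by
  have hdiff : g2 x * normCDF x - g1 x ^ 2 = normCDF x ^ 2 - normPDF x * g1 x := by
    simp only [g1, g2]; ring
  linarith [normPDF_mul_g1_lt_sq x]

theorem hasDerivAt_g2_div_g1 (x : ℝ) : HasDerivAt (fun y => g2 y / g1 y)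
    ((2 * g1 x ^ 2 - g2 x * normCDF x) / g1 x ^ 2) x :=
  ((hasDerivAt_g2 x).div (hasDerivAt_g1 x) (g1_pos x).ne').congr_deriv (by ring)

theorem strictMono_g2_div_g1 : StrictMono fun x => g2 x / g1 x := by
  refine strictMono_of_hasDerivAt_pos hasDerivAt_g2_div_g1 fun x => ?_
  exact div_pos (by linarith [normCDF_mul_g2_div_two_lt_sq x]) (pow_pos (g1_pos x) 2)

theorem strictMono_sub_g2_div_g1 : StrictMono fun x => x - g2 x / g1 x := by
  refine strictMono_of_hasDerivAt_pos
    (fun x => (hasDerivAt_id x).sub (hasDerivAt_g2_div_g1 x)) fun x => ?_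
  rw [sub_pos, div_lt_one (pow_pos (g1_pos x) 2)]
  linarith [sq_g1_lt_g2_mul_normCDF x]

theorem antitone_normCDF_div_g1 : Antitone fun x => normCDF x / g1 x := by
  refine antitone_of_hasDerivAt_nonpos
    (fun x => (hasDerivAt_normCDF x).div (hasDerivAt_g1 x) (g1_pos x).ne') fun x => ?_
  exact div_nonpos_of_nonpos_of_nonneg (by linarith [normPDF_mul_g1_lt_sq x]) (sq_nonneg _)

theorem mul_normCDF_zero_le_g1 (x : ℝ) : x * normCDF 0 ≤ g1 x := by
  have : x * normCDF 0 ≤ x * normCDF x := by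
    rcases le_total 0 x with hx | hx
    · exact mul_le_mul_of_nonneg_left (strictMono_normCDF.monotone hx) hx
    · exact mul_le_mul_of_nonpos_left (strictMono_normCDF.monotone hx) hx
  rw [g1]
  linarith [normPDF_pos x]

theorem g1_g1inv {t : ℝ} (ht : 0 < t) : g1 (g1inv t) = t := by
  have hcont : Continuous g1 :=
    continuous_iff_continuousAt.2 fun x => (hasDerivAt_g1 x).continuousAt
  obtain ⟨x, hx⟩ := (tendsto_g1_atBot.eventually (gt_mem_nhds ht)).exists
  have hlarge : t ≤ g1 (t / normCDF 0) := by
    simpa only [div_mul_cancel₀ t (normCDF_pos 0).ne'] using mul_normCDF_zero_le_g1 (t / normCDF 0)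
  exact Function.invFun_eq (mem_range_of_exists_le_of_exists_ge hcont ⟨x, hx.le⟩ ⟨_, hlarge⟩)

theorem strictMonoOn_g1inv : StrictMonoOn g1inv (Ioi 0) := fun s hs t ht hst => by
  rwa [← strictMono_g1.lt_iff_lt, g1_g1inv hs, g1_g1inv ht]

theorem monotoneOn_g1inv_mul_sub {k : ℝ} (hk : 1 ≤ k) :
    MonotoneOn (fun t => g1inv (k * t) - g1inv t) (Ioi 0) := by
  intro s hs t ht hst
  have hk0 : 0 < k := zero_lt_one.trans_le hk
  have hks : 0 < k * s := mul_pos hk0 hs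
  have hkt : 0 < k * t := mul_pos hk0 ht
  set d := g1inv (k * s) - g1inv s with hd
  have hd0 : 0 ≤ d :=
    sub_nonneg.2 (strictMonoOn_g1inv.monotoneOn hs hks (le_mul_of_one_le_left (le_of_lt hs) hk))
  have hratio : g1 (g1inv t + d) / g1 (g1inv t) ≤ g1 (g1inv s + d) / g1 (g1inv s) :=
    antitone_comp_add_const_div hasDerivAt_g1 g1_pos antitone_normCDF_div_g1 hd0
      (strictMonoOn_g1inv.monotoneOn hs ht hst)
  rw [hd, add_sub_cancel, ← hd, g1_g1inv hs, g1_g1inv ht, g1_g1inv hks,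
    mul_div_cancel_right₀ k (ne_of_gt hs), div_le_iff₀ ht, ← g1_g1inv hkt,
    strictMono_g1.le_iff_le] at hratio
  exact le_sub_iff_add_le'.2 hratio

/-- The slope `γ(t) = g(t) / t` of the chord of `g` from the origin, in which the fixed-point
equation becomes a balance between `ρ` and a monotone function of `ρ / (2mδ)`. -/
noncomputable def gSlope (t : ℝ) : ℝ := gfn t / t

theorem gSlope_eq {t : ℝ} (ht : 0 < t) : gSlope t = g2 (g1inv t) / g1 (g1inv t) := by
  rw [gSlope, gfn, g1_g1inv ht]

theorem gSlope_pos {t : ℝ} (ht : 0 < t) : 0 < gSlope t := div_pos (g2_pos _) ht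

theorem strictMonoOn_gSlope : StrictMonoOn gSlope (Ioi 0) := fun s hs t ht hst => by
  rw [gSlope_eq hs, gSlope_eq ht]
  exact strictMono_g2_div_g1 (strictMonoOn_g1inv hs ht hst)

theorem strictMonoOn_g1inv_sub_gSlope : StrictMonoOn (fun t => g1inv t - gSlope t) (Ioi 0) :=
  fun s hs t ht hst => by
    simp only [gSlope_eq hs, gSlope_eq ht]
    exact strictMono_sub_g2_div_g1 (strictMonoOn_g1inv hs ht hst)

/-- The intercept `β₀` of the max-margin classifier as a function of the minority probability `p`
and of `s = ρ / (2mδ)`. -/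
noncomputable def intercept (p s : ℝ) : ℝ := 1 / 2 * (g1inv (s / (1 - p)) - g1inv (s / p))

theorem antitoneOn_intercept {p : ℝ} (hp : p ∈ Ioc 0 (1 / 2)) :
    AntitoneOn (intercept p) (Ioi 0) := by
  intro s hs t ht hst
  have hp0 : 0 < p := hp.1
  have hq0 : 0 < 1 - p := by linarith [hp.2]
  have hk : 1 ≤ (1 - p) / p := (one_le_div hp0).2 (by linarith [hp.2])
  have hscale (u : ℝ) : (1 - p) / p * (u / (1 - p)) = u / p := by field_simp
  have hmono := monotoneOn_g1inv_mul_sub hk (div_pos hs hq0) (div_pos ht hq0)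
    (div_le_div_of_nonneg_right hst hq0.le)
  simp only [hscale] at hmono
  simp only [intercept]
  linarith

/-- The sum of the slopes of `g` at the minority and at the majority argument, as a function of the
minority probability `p` and of `s = ρ / (2mδ)`. -/
noncomputable def gSlopeSum (p s : ℝ) : ℝ := gSlope (s / p) + gSlope (s / (1 - p))

theorem gSlopeSum_pos {p s : ℝ} (hp : p ∈ Ioo 0 1) (hs : 0 < s) : 0 < gSlopeSum p s :=
  add_pos (gSlope_pos (div_pos hs hp.1)) (gSlope_pos (div_pos hs (sub_pos.2 hp.2)))

theorem strictMonoOn_gSlopeSum {p : ℝ} (hp : p ∈ Ioo 0 1) :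
    StrictMonoOn (gSlopeSum p) (Ioi 0) := fun _ hs _ ht hst =>
  have hq0 : 0 < 1 - p := sub_pos.2 hp.2
  add_lt_add
    (strictMonoOn_gSlope (div_pos hs hp.1) (div_pos ht hp.1) (div_lt_div_of_pos_right hst hp.1))
    (strictMonoOn_gSlope (div_pos hs hq0) (div_pos ht hq0) (div_lt_div_of_pos_right hst hq0))

/-- `r` is the limiting alignment `ρ*(p, m, δ)` of the max-margin direction with the signal: a root
in `(0, 1)` of the fixed-point equation. -/
structure IsAlignment (p m δ r : ℝ) : Prop where
  mem_Ioo : r ∈ Ioo 0 1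
  fixedPoint : p * δ * gfn (r / (2 * p * m * δ)) +
    (1 - p) * δ * gfn (r / (2 * (1 - p) * m * δ)) = 1 - r ^ 2

/-- The quantity `ρm + β₀` at alignment `r`; the minority error is `Φ` of its negative. -/
noncomputable def minorityMargin (p m δ r : ℝ) : ℝ :=
  r * m + 1 / 2 * (g1inv (r / (2 * (1 - p) * m * δ)) - g1inv (r / (2 * p * m * δ)))

theorem div_two_mul_mul_mul (r p m δ : ℝ) : r / (2 * p * m * δ) = r / (2 * m * δ) / p := by ring

theorem minorityMargin_eq_add_intercept (p m δ r : ℝ) :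
    minorityMargin p m δ r = r * m + intercept p (r / (2 * m * δ)) := by
  rw [minorityMargin, intercept, div_two_mul_mul_mul r p, div_two_mul_mul_mul r (1 - p)]

theorem lt_of_mul_eq_mul_one_sub_sq {r₁ r₂ k₁ k₂ c₁ c₂ : ℝ} (hr₁ : r₁ ∈ Ioo 0 1) (hr₂ : 0 ≤ r₂)
    (hk₂ : 0 ≤ k₂) (hk : k₂ < k₁) (hc₂ : 0 ≤ c₂) (hc : c₁ ≤ c₂)
    (h₁ : r₁ * k₁ = c₁ * (1 - r₁ ^ 2)) (h₂ : r₂ * k₂ = c₂ * (1 - r₂ ^ 2)) : r₁ < r₂ := by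
  by_contra! hr
  have hsq₁ : r₁ ^ 2 < 1 := pow_lt_one₀ hr₁.1.le hr₁.2 two_ne_zero
  have hsq : r₂ ^ 2 ≤ r₁ ^ 2 := pow_le_pow_left₀ hr₂ hr 2
  have hright : c₁ * (1 - r₁ ^ 2) ≤ c₂ * (1 - r₂ ^ 2) :=
    mul_le_mul hc (by linarith) (by linarith) hc₂
  have hleft : r₂ * k₂ < r₁ * k₁ := mul_lt_mul' hr hk hk₂ hr₁.1
  linarith

namespace IsAlignment

variable {p m δ r p₁ p₂ m₁ m₂ δ₁ δ₂ r₁ r₂ : ℝ}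

theorem scale_pos (h : IsAlignment p m δ r) (hm : 0 < m) (hδ : 0 < δ) : 0 < r / (2 * m * δ) :=
  div_pos h.mem_Ioo.1 (by positivity)

theorem mul_scale_mul_gSlopeSum (h : IsAlignment p m δ r) (hm : 0 < m) (hδ : 0 < δ) :
    δ * (r / (2 * m * δ)) * gSlopeSum p (r / (2 * m * δ)) = 1 - r ^ 2 := by
  have hs := h.scale_pos hm hδ
  rw [← h.fixedPoint, div_two_mul_mul_mul r p, div_two_mul_mul_mul r (1 - p)]
  set s := r / (2 * m * δ)
  simp only [gSlopeSum, gSlope]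
  field_simp

theorem mul_gSlopeSum (h : IsAlignment p m δ r) (hm : 0 < m) (hδ : 0 < δ) :
    r * gSlopeSum p (r / (2 * m * δ)) = 2 * m * (1 - r ^ 2) := by
  rw [← h.mul_scale_mul_gSlopeSum hm hδ]
  field_simp

theorem scale_lt_scale (h₁ : IsAlignment p m₁ δ₁ r₁) (h₂ : IsAlignment p m₂ δ₂ r₂)
    (hp : p ∈ Ioo 0 1) (hm₁ : 0 < m₁) (hm₂ : 0 < m₂) (hδ₁ : 0 < δ₁) (hδ : δ₁ ≤ δ₂)
    (hmδ : m₁ * δ₁ < m₂ * δ₂) : r₂ / (2 * m₂ * δ₂) < r₁ / (2 * m₁ * δ₁) := by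
  have hδ₂ : 0 < δ₂ := hδ₁.trans_le hδ
  have hs₁ := h₁.scale_pos hm₁ hδ₁
  have hs₂ := h₂.scale_pos hm₂ hδ₂
  by_contra! hs
  have hr : r₁ < r₂ :=
    calc r₁ = 2 * (m₁ * δ₁) * (r₁ / (2 * m₁ * δ₁)) := by field_simp
      _ < 2 * (m₂ * δ₂) * (r₂ / (2 * m₂ * δ₂)) :=
        mul_lt_mul (mul_lt_mul_of_pos_left hmδ two_pos) hs hs₁ (by positivity)
      _ = r₂ := by field_simp
  have hsum : gSlopeSum p (r₁ / (2 * m₁ * δ₁)) ≤ gSlopeSum p (r₂ / (2 * m₂ * δ₂)) :=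
    (strictMonoOn_gSlopeSum hp).monotoneOn hs₁ hs₂ hs
  have hprod : 1 - r₁ ^ 2 ≤ 1 - r₂ ^ 2 := by
    rw [← h₁.mul_scale_mul_gSlopeSum hm₁ hδ₁, ← h₂.mul_scale_mul_gSlopeSum hm₂ hδ₂]
    have := (gSlopeSum_pos hp hs₁).le
    gcongr
  linarith [pow_lt_pow_left₀ hr h₁.mem_Ioo.1.le two_ne_zero]

theorem minorityMargin_lt_of_mul_lt (h₁ : IsAlignment p m₁ δ₁ r₁) (h₂ : IsAlignment p m₂ δ₂ r₂)
    (hp : p ∈ Ioc 0 (1 / 2)) (hm₁ : 0 < m₁) (hδ₁ : 0 < δ₁) (hm : m₁ ≤ m₂) (hδ : δ₁ ≤ δ₂)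
    (hmδ : m₁ * δ₁ < m₂ * δ₂) : minorityMargin p m₁ δ₁ r₁ < minorityMargin p m₂ δ₂ r₂ := by
  have hm₂ : 0 < m₂ := hm₁.trans_le hm
  have hδ₂ : 0 < δ₂ := hδ₁.trans_le hδ
  have hp1 : p ∈ Ioo 0 1 := ⟨hp.1, by linarith [hp.2]⟩
  have hs₁ := h₁.scale_pos hm₁ hδ₁
  have hs₂ := h₂.scale_pos hm₂ hδ₂
  have hs := h₁.scale_lt_scale h₂ hp1 hm₁ hm₂ hδ₁ hδ hmδ
  have hr : r₁ < r₂ :=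
    lt_of_mul_eq_mul_one_sub_sq h₁.mem_Ioo h₂.mem_Ioo.1.le (gSlopeSum_pos hp1 hs₂).le
      (strictMonoOn_gSlopeSum hp1 hs₂ hs₁ hs) (by positivity) (by gcongr)
      (h₁.mul_gSlopeSum hm₁ hδ₁) (h₂.mul_gSlopeSum hm₂ hδ₂)
  rw [minorityMargin_eq_add_intercept, minorityMargin_eq_add_intercept]
  exact add_lt_add_of_lt_of_le (mul_lt_mul hr hm hm₁ h₂.mem_Ioo.1.le)
    (antitoneOn_intercept hp hs₂ hs₁ hs.le)

theorem lt_of_gSlopeSum_lt (h₁ : IsAlignment p₁ m δ r₁) (h₂ : IsAlignment p₂ m δ r₂)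
    (hp₂ : p₂ ∈ Ioo 0 1) (hm : 0 < m) (hδ : 0 < δ)
    (hlt : gSlopeSum p₂ (r₂ / (2 * m * δ)) < gSlopeSum p₁ (r₁ / (2 * m * δ))) : r₁ < r₂ :=
  lt_of_mul_eq_mul_one_sub_sq h₁.mem_Ioo h₂.mem_Ioo.1.le
    (gSlopeSum_pos hp₂ (h₂.scale_pos hm hδ)).le hlt (by positivity) le_rfl
    (h₁.mul_gSlopeSum hm hδ) (h₂.mul_gSlopeSum hm hδ)

theorem scale_div_lt_and_lt (h₁ : IsAlignment p₁ m δ r₁) (h₂ : IsAlignment p₂ m δ r₂)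
    (hp₁ : p₁ ∈ Ioo 0 1) (hp₂ : p₂ ∈ Ioo 0 1) (hp : p₁ < p₂) (hm : 0 < m) (hδ : 0 < δ) :
    r₂ / (2 * m * δ) / p₂ < r₁ / (2 * m * δ) / p₁ ∧
      r₁ / (2 * m * δ) / (1 - p₁) < r₂ / (2 * m * δ) / (1 - p₂) := by
  have hp0₁ : 0 < p₁ := hp₁.1
  have hp0₂ : 0 < p₂ := hp₂.1
  have hq₁ : 0 < 1 - p₁ := sub_pos.2 hp₁.2
  have hq₂ : 0 < 1 - p₂ := sub_pos.2 hp₂.2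
  have hq : 1 - p₂ < 1 - p₁ := sub_lt_sub_left hp 1
  have hs₁ := h₁.scale_pos hm hδ
  have hs₂ := h₂.scale_pos hm hδ
  rcases le_or_gt r₁ r₂ with hr | hr
  · have hs : r₁ / (2 * m * δ) ≤ r₂ / (2 * m * δ) := by gcongr
    have hmajority := div_lt_div₀' hs hq hs₂ hq₂
    refine ⟨?_, hmajority⟩
    by_contra! hminority
    refine hr.not_gt (h₂.lt_of_gSlopeSum_lt h₁ hp₁ hm hδ (add_lt_add_of_le_of_lt ?_ ?_))
    · exact strictMonoOn_gSlope.monotoneOn (div_pos hs₁ hp0₁) (div_pos hs₂ hp0₂) hminority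
    · exact strictMonoOn_gSlope (div_pos hs₁ hq₁) (div_pos hs₂ hq₂) hmajority
  · have hs : r₂ / (2 * m * δ) ≤ r₁ / (2 * m * δ) := by gcongr
    have hminority := div_lt_div₀' hs hp hs₁ hp0₁
    refine ⟨hminority, ?_⟩
    by_contra! hmajority
    refine hr.not_gt (h₁.lt_of_gSlopeSum_lt h₂ hp₂ hm hδ (add_lt_add_of_lt_of_le ?_ ?_))
    · exact strictMonoOn_gSlope (div_pos hs₂ hp0₂) (div_pos hs₁ hp0₁) hminority
    · exact strictMonoOn_gSlope.monotoneOn (div_pos hs₂ hq₂) (div_pos hs₁ hq₁) hmajority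

theorem two_mul_minorityMargin (h : IsAlignment p m δ r) (hm : 0 < m) (hδ : 0 < δ) :
    2 * minorityMargin p m δ r = 2 * m / r -
      (g1inv (r / (2 * m * δ) / p) + gSlope (r / (2 * m * δ) / p)) +
      (g1inv (r / (2 * m * δ) / (1 - p)) - gSlope (r / (2 * m * δ) / (1 - p))) := by
  have hr : 0 < r := h.mem_Ioo.1
  have hrm : 2 * (r * m) = 2 * m / r - gSlopeSum p (r / (2 * m * δ)) := by
    rw [eq_sub_iff_add_eq', eq_div_iff hr.ne']
    linarith [h.mul_gSlopeSum hm hδ]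
  rw [gSlopeSum] at hrm
  rw [minorityMargin_eq_add_intercept, intercept]
  linarith

theorem minorityMargin_lt_of_prior_lt (h₁ : IsAlignment p₁ m δ r₁) (h₂ : IsAlignment p₂ m δ r₂)
    (hp₁ : p₁ ∈ Ioo 0 1) (hp₂ : p₂ ∈ Ioo 0 1) (hp : p₁ < p₂) (hm : 0 < m) (hδ : 0 < δ) :
    minorityMargin p₁ m δ r₁ < minorityMargin p₂ m δ r₂ := by
  obtain ⟨hminority, hmajority⟩ := h₁.scale_div_lt_and_lt h₂ hp₁ hp₂ hp hm hδ
  have hs₁ := h₁.scale_pos hm hδ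
  have hs₂ := h₂.scale_pos hm hδ
  have hA₁ := div_pos hs₁ hp₁.1
  have hA₂ := div_pos hs₂ hp₂.1
  have hB₁ := div_pos hs₁ (sub_pos.2 hp₁.2)
  have hB₂ := div_pos hs₂ (sub_pos.2 hp₂.2)
  have hg1invA := strictMonoOn_g1inv hA₂ hA₁ hminority
  rcases le_or_gt r₁ r₂ with hr | hr
  · have hg1invB := strictMonoOn_g1inv hB₁ hB₂ hmajority
    have hrm : r₁ * m ≤ r₂ * m := mul_le_mul_of_nonneg_right hr hm.le
    simp only [minorityMargin_eq_add_intercept, intercept]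
    linarith
  · have hslopeA := strictMonoOn_gSlope hA₂ hA₁ hminority
    have hdiffB := strictMonoOn_g1inv_sub_gSlope hB₁ hB₂ hmajority
    have hmr : 2 * m / r₁ < 2 * m / r₂ :=
      div_lt_div_of_pos_left (by positivity) h₂.mem_Ioo.1 hr
    refine lt_of_mul_lt_mul_left (a := 2) ?_ zero_le_two
    rw [h₁.two_mul_minorityMargin hm hδ, h₂.two_mul_minorityMargin hm hδ]
    linarith

end IsAlignment

theorem stmt_14_general (ρ : ℝ → ℝ → ℝ → ℝ)
    (hρ : ∀ p m δ : ℝ, p ∈ Ioo (0 : ℝ) 1 → 0 < m → 0 < δ → IsAlignment p m δ (ρ p m δ)) :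
    (∀ m δ : ℝ, 0 < m → 0 < δ →
      StrictAntiOn (fun p => normCDF (-minorityMargin p m δ (ρ p m δ))) (Ioo 0 1)) ∧
    (∀ p δ : ℝ, p ∈ Ioc (0 : ℝ) (1 / 2) → 0 < δ →
      StrictAntiOn (fun m => normCDF (-minorityMargin p m δ (ρ p m δ))) (Ioi 0)) ∧
    (∀ p m : ℝ, p ∈ Ioc (0 : ℝ) (1 / 2) → 0 < m →
      StrictAntiOn (fun δ => normCDF (-minorityMargin p m δ (ρ p m δ))) (Ioi 0)) := by
  have hIoo {p : ℝ} (hp : p ∈ Ioc (0 : ℝ) (1 / 2)) : p ∈ Ioo (0 : ℝ) 1 :=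
    ⟨hp.1, hp.2.trans_lt one_half_lt_one⟩
  refine ⟨fun m δ hm hδ p₁ hp₁ p₂ hp₂ hp => ?_, fun p δ hp hδ m₁ hm₁ m₂ hm₂ hm => ?_,
    fun p m hp hm δ₁ hδ₁ δ₂ hδ₂ hδ => ?_⟩ <;> refine strictMono_normCDF (neg_lt_neg ?_)
  · exact (hρ p₁ m δ hp₁ hm hδ).minorityMargin_lt_of_prior_lt (hρ p₂ m δ hp₂ hm hδ) hp₁ hp₂ hp hm hδ
  · exact (hρ p m₁ δ (hIoo hp) hm₁ hδ).minorityMargin_lt_of_mul_lt (hρ p m₂ δ (hIoo hp) hm₂ hδ)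
      hp hm₁ hδ hm.le le_rfl (mul_lt_mul_of_pos_right hm hδ)
  · exact (hρ p m δ₁ (hIoo hp) hm hδ₁).minorityMargin_lt_of_mul_lt (hρ p m δ₂ (hIoo hp) hm hδ₂)
      hp hm hδ₁ le_rfl hδ.le (mul_lt_mul_of_pos_left hδ hm)

/-- The asymptotic minority-class error
`Err₊*(π,m,δ) = Φ(−ρ*·m − β₀*)` of the unrebalanced max-margin classifier is
strictly decreasing in each of `π` (on `(0,1/2)`), `m`, and `δ`. -/
theorem stmt_14 (ρstar : ℝ → ℝ → ℝ → ℝ)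
    (hρstar : ∀ p m δ : ℝ, p ∈ Set.Ioo (0 : ℝ) 1 → 0 < m → 0 < δ →
      ρstar p m δ ∈ Set.Ioo (0 : ℝ) 1 ∧
      p * δ * gfn (ρstar p m δ / (2 * p * m * δ)) +
          (1 - p) * δ * gfn (ρstar p m δ / (2 * (1 - p) * m * δ)) =
        1 - (ρstar p m δ) ^ 2)
    (β0star : ℝ → ℝ → ℝ → ℝ)
    (hβ0star : ∀ p m δ : ℝ, β0star p m δ =
      (1 / 2) * (g1inv (ρstar p m δ / (2 * (1 - p) * m * δ)) -
        g1inv (ρstar p m δ / (2 * p * m * δ))))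
    (Errplus : ℝ → ℝ → ℝ → ℝ)
    (hErrplus : ∀ p m δ : ℝ, Errplus p m δ =
      normCDF (-(ρstar p m δ * m) - β0star p m δ)) :
    (∀ m δ : ℝ, 0 < m → 0 < δ →
      StrictAntiOn (fun p => Errplus p m δ) (Set.Ioo 0 (1 / 2))) ∧
    (∀ p δ : ℝ, p ∈ Set.Ioo (0 : ℝ) (1 / 2) → 0 < δ →
      StrictAntiOn (fun m => Errplus p m δ) (Set.Ioi 0)) ∧
    (∀ p m : ℝ, p ∈ Set.Ioo (0 : ℝ) (1 / 2) → 0 < m →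
      StrictAntiOn (fun δ => Errplus p m δ) (Set.Ioi 0)) := by
  have hErr (p m δ : ℝ) : Errplus p m δ = normCDF (-minorityMargin p m δ (ρstar p m δ)) := by
    rw [hErrplus, hβ0star, minorityMargin, neg_add']
  obtain ⟨hprior, hsignal, haspect⟩ := stmt_14_general ρstar fun p m δ hp hm hδ =>
    ⟨(hρstar p m δ hp hm hδ).1, (hρstar p m δ hp hm hδ).2⟩
  simp only [hErr]
  exact ⟨fun m δ hm hδ => (hprior m δ hm hδ).mono (Ioo_subset_Ioo_right one_half_lt_one.le),
    fun p δ hp => hsignal p δ (Ioo_subset_Ioc_self hp),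
    fun p m hp => haspect p m (Ioo_subset_Ioc_self hp)⟩
end

section
/- Fix κ ∈ ℝ, τ > 0, m > 0, and π ∈ (0,1), and let γ be the standard Gaussian measure on ℝ. For ρ ∈ [−1,1] and β₀ ∈ ℝ define D_κ(ρ, β₀) := π·∫ max(τκ − ρm + t − β₀, 0)² dγ(t) + (1−π)·∫ max(κ − ρm + t + β₀, 0)² dγ(t) (which is strictly positive), and H_κ(ρ, β₀) := (1 − ρ²)/D_κ(ρ, β₀). Then H_κ attains its supremum over [−1,1] × ℝ, every maximizer (ρ*, β₀*) satisfies ρ* ∈ [0,1), and the maximizer is unique. -/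
open MeasureTheory ProbabilityTheory

/-!
Write `φ x = ∫ (x + t)₊² dγ(t)`, so that `D_κ(ρ, β₀)` is a positive combination of `φ` at two affine
functions of `(ρ, β₀)` which together determine `(ρ, β₀)`. Only two properties of `γ` matter: it has
a second moment, and it charges every half-line `(c, ∞)`. They make `φ` positive, strictly
increasing, strictly convex and divergent at `+∞`; hence `D_κ` is strictly convex, strictly
decreasing in `ρ`, and tends to infinity as `|β₀| → ∞` uniformly over `ρ ≤ 1`.

Coercivity gives a maximizer, whose value `M` is positive because `H_κ(0, 0) > 0`. Replacing `ρ < 0`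
by `-ρ` keeps the numerator and decreases the denominator, so `ρ ≥ 0` at a maximizer. Finally, the
maximizers of `H_κ` minimize `M D_κ - (1 - ρ²)`, which is strictly convex.
-/

open Set Filter

section Integral

variable {α : Type*} [MeasurableSpace α] {μ : Measure α}

lemma integral_lt_integral_of_forall_mem_lt {f g : α → ℝ} {s : Set α} (hf : Integrable f μ)
    (hg : Integrable g μ) (hle : f ≤ g) (hs : 0 < μ s) (hlt : ∀ t ∈ s, f t < g t) :
    ∫ t, f t ∂μ < ∫ t, g t ∂μ := by
  rw [← sub_pos, ← integral_sub hg hf,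
    integral_pos_iff_support_of_nonneg (fun t ↦ sub_nonneg.2 (hle t)) (hg.sub hf)]
  exact hs.trans_le (measure_mono fun t ht ↦ (sub_pos.2 (hlt t ht)).ne')

end Integral

section Convex

variable {E F : Type*} [AddCommGroup E] [Module ℝ E] [AddCommGroup F] [Module ℝ F]

lemma strictConvexOn_comp_affineMap {f : F → ℝ} {s : Set F} (hf : StrictConvexOn ℝ s f)
    (A : E →ᵃ[ℝ] F) (hA : Function.Injective A) : StrictConvexOn ℝ (A ⁻¹' s) (f ∘ A) := by
  refine ⟨hf.1.affine_preimage A, fun x hx y hy hxy c d hc hd hcd ↦ ?_⟩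
  rw [Function.comp_apply, Convex.combo_affine_apply hcd]
  exact hf.2 hx hy (hA.ne hxy) hc hd hcd

lemma strictConvexOn_const_mul {f : E → ℝ} {s : Set E} (hf : StrictConvexOn ℝ s f) {c : ℝ}
    (hc : 0 < c) : StrictConvexOn ℝ s (fun x ↦ c * f x) := by
  refine ⟨hf.1, fun x hx y hy hxy a b ha hb hab ↦ ?_⟩
  calc c * f (a • x + b • y) < c * (a • f x + b • f y) := by gcongr; exact hf.2 hx hy hxy ha hb hab
    _ = a • (c * f x) + b • (c * f y) := by simp only [smul_eq_mul]; ring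

lemma strictConvexOn_prod_add {f : E → ℝ} {g : F → ℝ} {s : Set E} {t : Set F}
    (hf : StrictConvexOn ℝ s f) (hg : StrictConvexOn ℝ t g) :
    StrictConvexOn ℝ (s ×ˢ t) (fun z ↦ f z.1 + g z.2) := by
  refine ⟨hf.1.prod hg.1, fun x hx y hy hxy a b ha hb hab ↦ ?_⟩
  have hf_le := hf.convexOn.2 hx.1 hy.1 ha.le hb.le hab
  have hg_le := hg.convexOn.2 hx.2 hy.2 ha.le hb.le hab
  simp only [Prod.fst_add, Prod.snd_add, Prod.smul_fst, Prod.smul_snd, smul_add]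
  by_cases h₁ : x.1 = y.1
  · have hg_lt := hg.2 hx.2 hy.2 (fun h₂ ↦ hxy (Prod.ext h₁ h₂)) ha hb hab
    linarith
  · have hf_lt := hf.2 hx.1 hy.1 h₁ ha hb hab
    linarith

lemma eq_of_isMaxOn_div {N D : E → ℝ} {s : Set E} (hN : ConcaveOn ℝ s N)
    (hD : StrictConvexOn ℝ s D) (hDpos : ∀ x ∈ s, 0 < D x) {x y : E} (hx : x ∈ s) (hy : y ∈ s)
    (hNx : 0 < N x) (hxmax : IsMaxOn (fun z ↦ N z / D z) s x)
    (hymax : IsMaxOn (fun z ↦ N z / D z) s y) : x = y := by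
  set M := N x / D x with hM
  have hMy : N y / D y = M := le_antisymm (hxmax hy) (hymax hx)
  have hconv : StrictConvexOn ℝ s ((fun z ↦ M * D z) - N) :=
    (strictConvexOn_const_mul hD (div_pos hNx (hDpos x hx))).sub_concaveOn hN
  have hmin : ∀ w ∈ s, N w / D w = M → IsMinOn ((fun z ↦ M * D z) - N) s w := by
    intro w hw hwM z hz
    have hz_le : N z ≤ M * D z := (div_le_iff₀ (hDpos z hz)).1 (hxmax hz)
    have hw_eq : N w = M * D w := (div_eq_iff (hDpos w hw).ne').1 hwM
    simp only [mem_ofPred_eq, Pi.sub_apply]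
    linarith
  exact hconv.eq_of_isMinOn (hmin x hx hM.symm) (hmin y hy hMy) hx hy

end Convex

lemma tendsto_snd_cocompact_of_isCompact {X Y : Type*} [TopologicalSpace X] [TopologicalSpace Y]
    {K : Set X} (hK : IsCompact K) :
    Tendsto Prod.snd (cocompact (X × Y) ⊓ 𝓟 (Prod.fst ⁻¹' K)) (cocompact Y) := by
  rw [hasBasis_cocompact.tendsto_right_iff]
  intro L hL
  filter_upwards [mem_inf_of_left (hK.prod hL).compl_mem_cocompact,
    mem_inf_of_right (mem_principal_self _)] with z hz hzK hzL
  exact hz ⟨hzK, hzL⟩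

lemma convexOn_sq_max_zero : ConvexOn ℝ univ (fun x : ℝ ↦ max x 0 ^ 2) :=
  ((convexOn_id convex_univ).sup (convexOn_const 0 convex_univ)).pow
    (fun _ _ ↦ le_max_right _ _) 2

lemma strictConvexOn_sq_max_zero : StrictConvexOn ℝ (Ici 0) (fun x : ℝ ↦ max x 0 ^ 2) :=
  (strictConvexOn_pow le_rfl).congr fun x hx ↦ by simp only [max_eq_left (mem_Ici.1 hx)]

/-- The second upper partial moment `∫ (x + t)₊² dμ(t)` of `μ` about `-x`. -/
noncomputable def upperPartialMoment (μ : Measure ℝ) (x : ℝ) : ℝ :=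
  ∫ t, max (x + t) 0 ^ 2 ∂μ

lemma upperPartialMoment_nonneg (μ : Measure ℝ) (x : ℝ) : 0 ≤ upperPartialMoment μ x :=
  integral_nonneg fun _ ↦ by positivity

section Moment

variable {μ : Measure ℝ} [IsFiniteMeasure μ]

lemma integrable_sq_max_add (hL2 : MemLp id 2 μ) (x : ℝ) :
    Integrable (fun t ↦ max (x + t) 0 ^ 2) μ :=
  ((memLp_const x).add hL2).pos_part.integrable_sq

lemma strictMono_upperPartialMoment (hL2 : MemLp id 2 μ) (hμ : ∀ c, 0 < μ (Ioi c)) :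
    StrictMono (upperPartialMoment μ) := by
  intro x y hxy
  refine integral_lt_integral_of_forall_mem_lt (integrable_sq_max_add hL2 x)
    (integrable_sq_max_add hL2 y) (fun t ↦ ?_) (hμ (-x)) fun t ht ↦ ?_
  · dsimp only
    gcongr
  · have ht : 0 < x + t := by linarith [mem_Ioi.1 ht]
    have ht' : 0 < y + t := by linarith
    rw [max_eq_left ht.le, max_eq_left ht'.le]
    gcongr

lemma upperPartialMoment_pos (hL2 : MemLp id 2 μ) (hμ : ∀ c, 0 < μ (Ioi c)) (x : ℝ) :
    0 < upperPartialMoment μ x :=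
  (upperPartialMoment_nonneg μ (x - 1)).trans_lt
    (strictMono_upperPartialMoment hL2 hμ (sub_one_lt x))

lemma strictConvexOn_upperPartialMoment (hL2 : MemLp id 2 μ) (hμ : ∀ c, 0 < μ (Ioi c)) :
    StrictConvexOn ℝ univ (upperPartialMoment μ) := by
  refine ⟨convex_univ, fun x _ y _ hxy a b ha hb hab ↦ ?_⟩
  have hx := (integrable_sq_max_add hL2 x).const_mul a
  have hy := (integrable_sq_max_add hL2 y).const_mul b
  have hshift (t : ℝ) : a • x + b • y + t = a • (x + t) + b • (y + t) := by
    simp only [smul_eq_mul]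
    linear_combination -t * hab
  calc upperPartialMoment μ (a • x + b • y)
      < ∫ t, (a * max (x + t) 0 ^ 2 + b * max (y + t) 0 ^ 2) ∂μ := by
        refine integral_lt_integral_of_forall_mem_lt (integrable_sq_max_add hL2 _) (hx.add hy)
          (fun t ↦ ?_) (hμ (max (-x) (-y))) fun t ht ↦ ?_
        · rw [hshift]
          exact convexOn_sq_max_zero.2 trivial trivial ha.le hb.le hab
        · obtain ⟨hxt, hyt⟩ := max_lt_iff.1 (mem_Ioi.1 ht)
          rw [hshift]
          exact strictConvexOn_sq_max_zero.2 (mem_Ici.2 (by linarith)) (mem_Ici.2 (by linarith))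
            (by simpa using hxy) ha hb hab
    _ = a • upperPartialMoment μ x + b • upperPartialMoment μ y := by
        rw [integral_add hx hy, integral_const_mul, integral_const_mul]
        rfl

lemma sq_mul_measureReal_Ioi_le_upperPartialMoment (hL2 : MemLp id 2 μ) {x : ℝ} (hx : 0 ≤ x) :
    x ^ 2 * μ.real (Ioi 0) ≤ upperPartialMoment μ x := by
  have hsub : Ioi 0 ⊆ {t | x ^ 2 ≤ max (x + t) 0 ^ 2} := fun t ht ↦ by
    have : x ≤ max (x + t) 0 := le_max_of_le_left (by linarith [mem_Ioi.1 ht])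
    simp only [mem_ofPred_eq]
    gcongr
  calc x ^ 2 * μ.real (Ioi 0) ≤ x ^ 2 * μ.real {t | x ^ 2 ≤ max (x + t) 0 ^ 2} :=
        mul_le_mul_of_nonneg_left (measureReal_mono hsub) (sq_nonneg x)
    _ ≤ upperPartialMoment μ x :=
        mul_meas_ge_le_integral_of_nonneg (ae_of_all _ fun _ ↦ by positivity)
          (integrable_sq_max_add hL2 x) _

lemma tendsto_upperPartialMoment_atTop (hL2 : MemLp id 2 μ) (hμ : 0 < μ (Ioi 0)) :
    Tendsto (upperPartialMoment μ) atTop atTop := by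
  have hμ_real : 0 < μ.real (Ioi 0) := ENNReal.toReal_pos hμ.ne' (measure_ne_top μ _)
  refine tendsto_atTop_mono' _ ?_
    ((tendsto_pow_atTop two_ne_zero).atTop_mul_const hμ_real)
  filter_upwards [eventually_ge_atTop 0] with x hx
  exact sq_mul_measureReal_Ioi_le_upperPartialMoment hL2 hx

end Moment

/-- The domain `[-1, 1] × ℝ` of the objective. -/
def alignmentStrip : Set (ℝ × ℝ) := Prod.fst ⁻¹' Icc (-1) 1

lemma convex_alignmentStrip : Convex ℝ alignmentStrip :=
  (convex_Icc (-1 : ℝ) 1).linear_preimage (LinearMap.fst ℝ ℝ ℝ)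

lemma isClosed_alignmentStrip : IsClosed alignmentStrip :=
  isClosed_Icc.preimage continuous_fst

lemma zero_mem_alignmentStrip : (0 : ℝ × ℝ) ∈ alignmentStrip := by
  simp [alignmentStrip]

/-- The expected squared margin violation of the linear classifier with alignment `z.1` and
intercept `z.2`: the two classes have weights `w₁`, `w₂` and margins `a`, `b`, and `m` is the signal
strength. -/
noncomputable def marginLoss (μ : Measure ℝ) (w₁ w₂ a b m : ℝ) (z : ℝ × ℝ) : ℝ :=
  w₁ * upperPartialMoment μ (a - z.1 * m - z.2) + w₂ * upperPartialMoment μ (b - z.1 * m + z.2)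

section Loss

variable {μ : Measure ℝ} [IsFiniteMeasure μ] {w₁ w₂ a b m : ℝ}

lemma marginLoss_pos (hL2 : MemLp id 2 μ) (hμ : ∀ c, 0 < μ (Ioi c)) (hw₁ : 0 < w₁) (hw₂ : 0 < w₂)
    (z : ℝ × ℝ) : 0 < marginLoss μ w₁ w₂ a b m z :=
  add_pos (mul_pos hw₁ (upperPartialMoment_pos hL2 hμ _))
    (mul_pos hw₂ (upperPartialMoment_pos hL2 hμ _))

lemma strictAnti_marginLoss_fst (hL2 : MemLp id 2 μ) (hμ : ∀ c, 0 < μ (Ioi c)) (hw₁ : 0 < w₁)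
    (hw₂ : 0 < w₂) (hm : 0 < m) (β : ℝ) : StrictAnti fun ρ ↦ marginLoss μ w₁ w₂ a b m (ρ, β) := by
  intro ρ ρ' hρ
  have hmono := strictMono_upperPartialMoment hL2 hμ
  simp only [marginLoss]
  gcongr <;> apply hmono <;> gcongr

lemma strictConvexOn_marginLoss (hL2 : MemLp id 2 μ) (hμ : ∀ c, 0 < μ (Ioi c)) (hw₁ : 0 < w₁)
    (hw₂ : 0 < w₂) (hm : m ≠ 0) : StrictConvexOn ℝ univ (marginLoss μ w₁ w₂ a b m) := by
  let A : ℝ × ℝ →ᵃ[ℝ] ℝ × ℝ := AffineMap.const ℝ (ℝ × ℝ) (a, b) +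
    ((-m • LinearMap.fst ℝ ℝ ℝ - LinearMap.snd ℝ ℝ ℝ).prod
      (-m • LinearMap.fst ℝ ℝ ℝ + LinearMap.snd ℝ ℝ ℝ)).toAffineMap
  have hA (z : ℝ × ℝ) : A z = (a - z.1 * m - z.2, b - z.1 * m + z.2) := by
    ext <;> simp [A] <;> ring
  have hinj : Function.Injective A := by
    intro z w hzw
    simp only [hA, Prod.mk.injEq] at hzw
    have hfst : z.1 * m = w.1 * m := by linarith
    exact Prod.ext (mul_right_cancel₀ hm hfst) (by linarith)
  have hφ := strictConvexOn_upperPartialMoment hL2 hμ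
  have hsum := strictConvexOn_prod_add (strictConvexOn_const_mul hφ hw₁)
    (strictConvexOn_const_mul hφ hw₂)
  rw [univ_prod_univ] at hsum
  refine (strictConvexOn_comp_affineMap hsum A hinj).congr fun z _ ↦ ?_
  simp only [Function.comp_apply, hA, marginLoss]

lemma continuous_marginLoss (hL2 : MemLp id 2 μ) (hμ : ∀ c, 0 < μ (Ioi c)) (hw₁ : 0 < w₁)
    (hw₂ : 0 < w₂) (hm : m ≠ 0) : Continuous (marginLoss μ w₁ w₂ a b m) :=
  continuousOn_univ.1
    ((strictConvexOn_marginLoss hL2 hμ hw₁ hw₂ hm).convexOn.continuousOn isOpen_univ)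

lemma tendsto_marginLoss_snd_cocompact (hL2 : MemLp id 2 μ) (hμ : 0 < μ (Ioi 0)) (hw₁ : 0 < w₁)
    (hw₂ : 0 < w₂) (ρ : ℝ) :
    Tendsto (fun β ↦ marginLoss μ w₁ w₂ a b m (ρ, β)) (cocompact ℝ) atTop := by
  have hφ := tendsto_upperPartialMoment_atTop hL2 hμ
  rw [cocompact_eq_atBot_atTop, tendsto_sup]
  constructor
  · have harg : Tendsto (fun β ↦ a - ρ * m - β) atBot atTop :=
      tendsto_atTop_add_const_left _ _ tendsto_neg_atBot_atTop
    exact tendsto_atTop_mono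
      (fun β ↦ le_add_of_nonneg_right (mul_nonneg hw₂.le (upperPartialMoment_nonneg μ _)))
      ((hφ.comp harg).const_mul_atTop hw₁)
  · have harg : Tendsto (fun β ↦ b - ρ * m + β) atTop atTop :=
      tendsto_atTop_add_const_left _ _ tendsto_id
    exact tendsto_atTop_mono
      (fun β ↦ le_add_of_nonneg_left (mul_nonneg hw₁.le (upperPartialMoment_nonneg μ _)))
      ((hφ.comp harg).const_mul_atTop hw₂)

lemma tendsto_marginLoss_cocompact_alignmentStrip (hL2 : MemLp id 2 μ) (hμ : ∀ c, 0 < μ (Ioi c))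
    (hw₁ : 0 < w₁) (hw₂ : 0 < w₂) (hm : 0 < m) :
    Tendsto (marginLoss μ w₁ w₂ a b m) (cocompact (ℝ × ℝ) ⊓ 𝓟 alignmentStrip) atTop := by
  have hedge := tendsto_marginLoss_snd_cocompact (a := a) (b := b) (m := m) hL2 (hμ 0) hw₁ hw₂ 1
  refine tendsto_atTop_mono' _ ?_ (hedge.comp (tendsto_snd_cocompact_of_isCompact isCompact_Icc))
  filter_upwards [mem_inf_of_right (mem_principal_self alignmentStrip)] with z hz
  exact (strictAnti_marginLoss_fst hL2 hμ hw₁ hw₂ hm z.2).antitone hz.2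

end Loss

/-- The max-margin objective `(1 - ρ²) / D(ρ, β)`, where `D` is `marginLoss`. -/
noncomputable def marginRatio (μ : Measure ℝ) (w₁ w₂ a b m : ℝ) (z : ℝ × ℝ) : ℝ :=
  (1 - z.1 ^ 2) / marginLoss μ w₁ w₂ a b m z

lemma concaveOn_one_sub_fst_sq : ConcaveOn ℝ univ (fun z : ℝ × ℝ ↦ 1 - z.1 ^ 2) :=
  (concaveOn_const 1 convex_univ).sub
    ((even_two.convexOn_pow (𝕜 := ℝ)).comp_linearMap (LinearMap.fst ℝ ℝ ℝ))

section Ratio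

variable {μ : Measure ℝ} [IsFiniteMeasure μ] {w₁ w₂ a b m : ℝ}

lemma exists_isMaxOn_marginRatio (hL2 : MemLp id 2 μ) (hμ : ∀ c, 0 < μ (Ioi c)) (hw₁ : 0 < w₁)
    (hw₂ : 0 < w₂) (hm : 0 < m) :
    ∃ z ∈ alignmentStrip, IsMaxOn (marginRatio μ w₁ w₂ a b m) alignmentStrip z := by
  have hD_pos (z : ℝ × ℝ) : 0 < marginLoss μ w₁ w₂ a b m z := marginLoss_pos hL2 hμ hw₁ hw₂ z
  have hD_cont := continuous_marginLoss (a := a) (b := b) hL2 hμ hw₁ hw₂ hm.ne'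
  have hcont : Continuous (marginRatio μ w₁ w₂ a b m) :=
    Continuous.div (by fun_prop) hD_cont fun z ↦ (hD_pos z).ne'
  refine hcont.continuousOn.exists_isMaxOn' isClosed_alignmentStrip zero_mem_alignmentStrip ?_
  have hD_tendsto :=
    tendsto_marginLoss_cocompact_alignmentStrip (a := a) (b := b) hL2 hμ hw₁ hw₂ hm
  filter_upwards [hD_tendsto.eventually_ge_atTop (marginLoss μ w₁ w₂ a b m 0)] with z hz
  exact div_le_div₀ (by simp) (by simpa using sq_nonneg z.1) (hD_pos 0) hz

lemma one_sub_fst_sq_pos_of_isMaxOn_marginRatio (hL2 : MemLp id 2 μ) (hμ : ∀ c, 0 < μ (Ioi c))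
    (hw₁ : 0 < w₁) (hw₂ : 0 < w₂) {z : ℝ × ℝ}
    (hmax : IsMaxOn (marginRatio μ w₁ w₂ a b m) alignmentStrip z) : 0 < 1 - z.1 ^ 2 := by
  have hD_pos (z : ℝ × ℝ) : 0 < marginLoss μ w₁ w₂ a b m z := marginLoss_pos hL2 hμ hw₁ hw₂ z
  have hzero : 0 < marginRatio μ w₁ w₂ a b m 0 := div_pos (by simp) (hD_pos 0)
  exact (div_pos_iff_of_pos_right (hD_pos z)).1 (hzero.trans_le (hmax zero_mem_alignmentStrip))

lemma fst_nonneg_of_isMaxOn_marginRatio (hL2 : MemLp id 2 μ) (hμ : ∀ c, 0 < μ (Ioi c))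
    (hw₁ : 0 < w₁) (hw₂ : 0 < w₂) (hm : 0 < m) {z : ℝ × ℝ} (hz : z ∈ alignmentStrip)
    (hmax : IsMaxOn (marginRatio μ w₁ w₂ a b m) alignmentStrip z) : 0 ≤ z.1 := by
  by_contra! hneg
  have hreflect_mem : (-z.1, z.2) ∈ alignmentStrip := ⟨neg_le_neg hz.2, neg_le.1 hz.1⟩
  have hloss : marginLoss μ w₁ w₂ a b m (-z.1, z.2) < marginLoss μ w₁ w₂ a b m z :=
    strictAnti_marginLoss_fst hL2 hμ hw₁ hw₂ hm z.2 (by linarith)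
  have hratio : marginRatio μ w₁ w₂ a b m z < marginRatio μ w₁ w₂ a b m (-z.1, z.2) := by
    simp only [marginRatio, neg_sq]
    exact div_lt_div_of_pos_left (one_sub_fst_sq_pos_of_isMaxOn_marginRatio hL2 hμ hw₁ hw₂ hmax)
      (marginLoss_pos hL2 hμ hw₁ hw₂ _) hloss
  exact (hmax hreflect_mem).not_gt hratio

lemma eq_of_isMaxOn_marginRatio (hL2 : MemLp id 2 μ) (hμ : ∀ c, 0 < μ (Ioi c)) (hw₁ : 0 < w₁)
    (hw₂ : 0 < w₂) (hm : m ≠ 0) {z z' : ℝ × ℝ} (hz : z ∈ alignmentStrip) (hz' : z' ∈ alignmentStrip)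
    (hmax : IsMaxOn (marginRatio μ w₁ w₂ a b m) alignmentStrip z)
    (hmax' : IsMaxOn (marginRatio μ w₁ w₂ a b m) alignmentStrip z') : z = z' :=
  eq_of_isMaxOn_div (concaveOn_one_sub_fst_sq.subset (subset_univ _) convex_alignmentStrip)
    ((strictConvexOn_marginLoss hL2 hμ hw₁ hw₂ hm).subset (subset_univ _) convex_alignmentStrip)
    (fun z _ ↦ marginLoss_pos hL2 hμ hw₁ hw₂ z) hz hz'
    (one_sub_fst_sq_pos_of_isMaxOn_marginRatio hL2 hμ hw₁ hw₂ hmax) hmax hmax'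

end Ratio

lemma gaussianReal_Ioi_pos (μ : ℝ) {v : NNReal} (hv : v ≠ 0) (c : ℝ) :
    0 < gaussianReal μ v (Ioi c) := by
  have := (gaussianReal_absolutelyContinuous' μ hv).isOpenPosMeasure
  exact isOpen_Ioi.measure_pos _ nonempty_Ioi

theorem stmt_17_general {μ : Measure ℝ} [IsFiniteMeasure μ] (hL2 : MemLp id 2 μ)
    (hμ : ∀ c, 0 < μ (Ioi c)) {w₁ w₂ a b m : ℝ} (hw₁ : 0 < w₁) (hw₂ : 0 < w₂) (hm : 0 < m)
    (Dk Hk : ℝ → ℝ → ℝ)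
    (hDk : ∀ ρ β₀ : ℝ, Dk ρ β₀ =
      w₁ * (∫ t, (max (a - ρ * m + t - β₀) 0) ^ 2 ∂μ) +
        w₂ * (∫ t, (max (b - ρ * m + t + β₀) 0) ^ 2 ∂μ))
    (hHk : ∀ ρ β₀ : ℝ, Hk ρ β₀ = (1 - ρ ^ 2) / Dk ρ β₀) :
    (∀ ρ β₀ : ℝ, 0 < Dk ρ β₀) ∧
    (∃ q : ℝ × ℝ, q.1 ∈ Icc (-1 : ℝ) 1 ∧
      ∀ r : ℝ × ℝ, r.1 ∈ Icc (-1 : ℝ) 1 → Hk r.1 r.2 ≤ Hk q.1 q.2) ∧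
    (∀ q : ℝ × ℝ, q.1 ∈ Icc (-1 : ℝ) 1 →
      (∀ r : ℝ × ℝ, r.1 ∈ Icc (-1 : ℝ) 1 → Hk r.1 r.2 ≤ Hk q.1 q.2) →
      q.1 ∈ Ico (0 : ℝ) 1) ∧
    (∃! q : ℝ × ℝ, q.1 ∈ Icc (-1 : ℝ) 1 ∧
      ∀ r : ℝ × ℝ, r.1 ∈ Icc (-1 : ℝ) 1 → Hk r.1 r.2 ≤ Hk q.1 q.2) := by
  have hD (ρ β : ℝ) : Dk ρ β = marginLoss μ w₁ w₂ a b m (ρ, β) := by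
    simp only [hDk, marginLoss, upperPartialMoment, add_sub_right_comm, add_right_comm]
  have hH (z : ℝ × ℝ) : Hk z.1 z.2 = marginRatio μ w₁ w₂ a b m z := by
    rw [hHk, hD, marginRatio]
  simp only [hD, hH]
  obtain ⟨q, hq, hqmax⟩ := exists_isMaxOn_marginRatio (a := a) (b := b) hL2 hμ hw₁ hw₂ hm
  refine ⟨fun ρ β ↦ marginLoss_pos hL2 hμ hw₁ hw₂ _, ⟨q, hq, fun _ hr ↦ hqmax hr⟩, ?_,
    ⟨q, ⟨hq, fun _ hr ↦ hqmax hr⟩, ?_⟩⟩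
  · intro r hr hrmax
    have hsq := one_sub_fst_sq_pos_of_isMaxOn_marginRatio hL2 hμ hw₁ hw₂ hrmax
    exact ⟨fst_nonneg_of_isMaxOn_marginRatio hL2 hμ hw₁ hw₂ hm hr hrmax,
      lt_of_pow_lt_pow_left₀ 2 zero_le_one (by linarith)⟩
  · rintro r ⟨hr, hrmax⟩
    exact eq_of_isMaxOn_marginRatio hL2 hμ hw₁ hw₂ hm.ne' hr hq hrmax hqmax

/-- The objective `H_κ(ρ,β₀) = (1−ρ²)/D_κ(ρ,β₀)` has a strictly
positive denominator, attains its supremum over `[−1,1] × ℝ`, every maximizer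
has `ρ ∈ [0,1)`, and the maximizer is unique. -/
theorem stmt_17 (κ τ m p : ℝ) (hτ : 0 < τ) (hm : 0 < m)
    (hp : p ∈ Set.Ioo (0 : ℝ) 1)
    (Dk Hk : ℝ → ℝ → ℝ)
    (hDk : ∀ ρ β₀ : ℝ, Dk ρ β₀ =
      p * (∫ t, (max (τ * κ - ρ * m + t - β₀) 0) ^ 2 ∂(gaussianReal 0 1)) +
        (1 - p) * (∫ t, (max (κ - ρ * m + t + β₀) 0) ^ 2 ∂(gaussianReal 0 1)))
    (hHk : ∀ ρ β₀ : ℝ, Hk ρ β₀ = (1 - ρ ^ 2) / Dk ρ β₀) :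
    (∀ ρ β₀ : ℝ, 0 < Dk ρ β₀) ∧
    (∃ q : ℝ × ℝ, q.1 ∈ Set.Icc (-1 : ℝ) 1 ∧
      ∀ r : ℝ × ℝ, r.1 ∈ Set.Icc (-1 : ℝ) 1 → Hk r.1 r.2 ≤ Hk q.1 q.2) ∧
    (∀ q : ℝ × ℝ, q.1 ∈ Set.Icc (-1 : ℝ) 1 →
      (∀ r : ℝ × ℝ, r.1 ∈ Set.Icc (-1 : ℝ) 1 → Hk r.1 r.2 ≤ Hk q.1 q.2) →
      q.1 ∈ Set.Ico (0 : ℝ) 1) ∧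
    (∃! q : ℝ × ℝ, q.1 ∈ Set.Icc (-1 : ℝ) 1 ∧
      ∀ r : ℝ × ℝ, r.1 ∈ Set.Icc (-1 : ℝ) 1 → Hk r.1 r.2 ≤ Hk q.1 q.2) :=
  stmt_17_general (memLp_id_gaussianReal 2) (gaussianReal_Ioi_pos 0 one_ne_zero) hp.1
    (sub_pos.2 hp.2) hm Dk Hk hDk hHk
end

section
/- Let n ≥ 1 and d ≥ 1; let y₁,…,yₙ ∈ {−1,+1} with at least one label of each sign; let μ ∈ ℝ^d with μ ≠ 0 and z₁,…,zₙ ∈ ℝ^d, and set x_i := y_i·μ + z_i. Define g_i := ⟨z_i, μ⟩/‖μ‖₂, let ḡ₊ and z̄₊ (resp. ḡ₋ and z̄₋) be the averages of g_i and z_i over indices with y_i = +1 (resp. y_i = −1), and set g̃ := (ḡ₊ − ḡ₋)/2, z̃ := (z̄₊ − z̄₋)/2, and P⊥z̃ := z̃ − (⟨z̃, μ⟩/‖μ‖₂²)·μ. Then for every β ∈ ℝ^d with ‖β‖₂ ≤ 1 and every β₀ ∈ ℝ: min_{1≤i≤n} y_i(⟨x_i, β⟩ + β₀) ≤ √((‖μ‖₂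 + g̃)² + ‖P⊥z̃‖₂²). -/
open scoped RealInnerProductSpace

/-!
The margin is at most half the distance between the two class means. Indeed, averaging the bounds
`m ≤ ⟪x i, β⟫ + β₀` over positive labels and `m ≤ -(⟪x i, β⟫ + β₀)` over negative labels, and then
averaging the two results, eliminates `β₀` and leaves `m ≤ ⟪μ + z̃, β⟫ ≤ ‖μ + z̃‖`. Splitting `z̃`
into its components along and orthogonal to `μ` evaluates the last norm.
-/

section HalfMeanGap

variable {ι E F : Type*} [AddCommGroup E] [Module ℝ E] [AddCommGroup F] [Module ℝ F]
  {P N : Finset ι}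

/-- Half the difference of the averages of `f` over `P` and over `N`, the classes of positive and
negative labels; `z̃` and `g̃` are its values at `z` and `g`. The average over `∅` is `0`. -/
noncomputable def halfMeanGap (P N : Finset ι) (f : ι → E) : E :=
  (2 : ℝ)⁻¹ • ((P.card : ℝ)⁻¹ • ∑ i ∈ P, f i - (N.card : ℝ)⁻¹ • ∑ i ∈ N, f i)

theorem map_halfMeanGap (L : E →ₗ[ℝ] F) (f : ι → E) :
    L (halfMeanGap P N f) = halfMeanGap P N fun i => L (f i) := by
  simp only [halfMeanGap, map_smul, map_sub, map_sum]

theorem halfMeanGap_add (f g : ι → E) :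
    (halfMeanGap P N fun i => f i + g i) = halfMeanGap P N f + halfMeanGap P N g := by
  simp only [halfMeanGap, Finset.sum_add_distrib]
  module

theorem halfMeanGap_label_smul (hP : P.Nonempty) (hN : N.Nonempty) {y : ι → ℝ}
    (hyP : ∀ i ∈ P, y i = 1) (hyN : ∀ i ∈ N, y i = -1) (v : E) :
    (halfMeanGap P N fun i => y i • v) = v := by
  have hP₀ : (P.card : ℝ) ≠ 0 := by exact_mod_cast hP.card_ne_zero
  have hN₀ : (N.card : ℝ) ≠ 0 := by exact_mod_cast hN.card_ne_zero
  have mean_P : (P.card : ℝ)⁻¹ • ∑ i ∈ P, y i • v = v := by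
    rw [← Finset.sum_smul, Finset.sum_congr rfl hyP]
    simp [smul_smul, hP₀]
  have mean_N : (N.card : ℝ)⁻¹ • ∑ i ∈ N, y i • v = -v := by
    rw [← Finset.sum_smul, Finset.sum_congr rfl hyN]
    simp [smul_smul, hN₀]
  rw [halfMeanGap, mean_P, mean_N]
  module

theorem le_inv_card_smul_sum {s : Finset ι} (hs : s.Nonempty) {a : ι → ℝ} {m : ℝ}
    (h : ∀ i ∈ s, m ≤ a i) : m ≤ (s.card : ℝ)⁻¹ • ∑ i ∈ s, a i := by
  rw [smul_eq_mul, le_inv_mul_iff₀ (by exact_mod_cast hs.card_pos), ← nsmul_eq_mul]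
  exact s.card_nsmul_le_sum a m h

theorem le_halfMeanGap_of_le_label_mul (hP : P.Nonempty) (hN : N.Nonempty) {y : ι → ℝ}
    (hyP : ∀ i ∈ P, y i = 1) (hyN : ∀ i ∈ N, y i = -1) {a : ι → ℝ} {b m : ℝ}
    (h : ∀ i, m ≤ y i * (a i + b)) : m ≤ halfMeanGap P N a := by
  have le_mean_P : m - b ≤ (P.card : ℝ)⁻¹ • ∑ i ∈ P, a i :=
    le_inv_card_smul_sum hP fun i hi => by linarith [hyP i hi ▸ h i]
  have le_neg_mean_N : m + b ≤ (N.card : ℝ)⁻¹ • ∑ i ∈ N, -a i :=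
    le_inv_card_smul_sum hN fun i hi => by linarith [hyN i hi ▸ h i]
  rw [Finset.sum_neg_distrib, smul_neg] at le_neg_mean_N
  rw [halfMeanGap, smul_eq_mul]
  linarith

end HalfMeanGap

section InnerProductSpace

variable {ι E : Type*} [NormedAddCommGroup E] [InnerProductSpace ℝ E] {P N : Finset ι}

theorem margin_le_norm_halfMeanGap (hP : P.Nonempty) (hN : N.Nonempty) {y : ι → ℝ}
    (hyP : ∀ i ∈ P, y i = 1) (hyN : ∀ i ∈ N, y i = -1) {x : ι → E} {β : E} (hβ : ‖β‖ ≤ 1)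
    {β₀ m : ℝ} (hm : ∀ i, m ≤ y i * (⟪x i, β⟫ + β₀)) : m ≤ ‖halfMeanGap P N x‖ :=
  calc
    m ≤ halfMeanGap P N fun i => ⟪x i, β⟫ := le_halfMeanGap_of_le_label_mul hP hN hyP hyN hm
    _ = ⟪halfMeanGap P N x, β⟫ := (map_halfMeanGap ((innerₗ E).flip β) x).symm
    _ ≤ ‖halfMeanGap P N x‖ * ‖β‖ := real_inner_le_norm _ _
    _ ≤ ‖halfMeanGap P N x‖ := mul_le_of_le_one_right (norm_nonneg _) hβ

theorem norm_add_eq_sqrt_parallel_sq_add_orthogonal_sq {μ : E} (hμ : μ ≠ 0) (v : E) :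
    ‖μ + v‖ = √((‖μ‖ + ⟪v, μ⟫ / ‖μ‖) ^ 2 + ‖v - (⟪v, μ⟫ / ‖μ‖ ^ 2) • μ‖ ^ 2) := by
  have hμ₀ : ‖μ‖ ≠ 0 := norm_ne_zero_iff.mpr hμ
  set c := ⟪v, μ⟫ / ‖μ‖ ^ 2 with hc
  have orthogonal : ⟪(1 + c) • μ, v - c • μ⟫ = 0 := by
    rw [real_inner_smul_left, inner_sub_right, real_inner_smul_right, real_inner_comm,
      real_inner_self_eq_norm_sq, hc, div_mul_cancel₀ _ (pow_ne_zero 2 hμ₀), sub_self, mul_zero]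
  have parallel : ‖(1 + c) • μ‖ ^ 2 = (‖μ‖ + ⟪v, μ⟫ / ‖μ‖) ^ 2 := by
    rw [norm_smul, mul_pow, Real.norm_eq_abs, sq_abs, ← mul_pow, hc]
    field_simp
  rw [← parallel, sq, sq, ← norm_add_sq_eq_norm_sq_add_norm_sq_real orthogonal,
    Real.sqrt_mul_self (norm_nonneg _)]
  congr 1
  module

theorem stmt_18_general (hP : P.Nonempty) (hN : N.Nonempty) {y : ι → ℝ}
    (hyP : ∀ i ∈ P, y i = 1) (hyN : ∀ i ∈ N, y i = -1) {μ : E} (hμ : μ ≠ 0) {z : ι → E}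
    {ztil : E} (hztil : ztil = halfMeanGap P N z)
    {gtil : ℝ} (hgtil : gtil = halfMeanGap P N fun i => ⟪z i, μ⟫ / ‖μ‖)
    {β : E} (hβ : ‖β‖ ≤ 1) {β₀ m : ℝ} (hm : ∀ i, m ≤ y i * (⟪y i • μ + z i, β⟫ + β₀)) :
    m ≤ √((‖μ‖ + gtil) ^ 2 + ‖ztil - (⟪ztil, μ⟫ / ‖μ‖ ^ 2) • μ‖ ^ 2) := by
  have gtil_eq : gtil = ⟪ztil, μ⟫ / ‖μ‖ := by
    simpa [hgtil, hztil, div_eq_inv_mul, real_inner_comm] using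
      (map_halfMeanGap (P := P) (N := N) (‖μ‖⁻¹ • innerₗ E μ) z).symm
  calc
    m ≤ ‖halfMeanGap P N fun i => y i • μ + z i‖ := margin_le_norm_halfMeanGap hP hN hyP hyN hβ hm
    _ = ‖μ + ztil‖ := by rw [halfMeanGap_add, halfMeanGap_label_smul hP hN hyP hyN, hztil]
    _ = _ := by rw [gtil_eq, norm_add_eq_sqrt_parallel_sq_add_orthogonal_sq hμ]

end InnerProductSpace

/-- Deterministic upper bound on the margin of any linear
classifier on two-component mixture data:
`min_i y_i(⟨x_i,β⟩+β₀) ≤ √((‖μ‖ + g̃)² + ‖P⊥z̃‖²)`. -/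
theorem stmt_18
    (n d : ℕ) (hn : 1 ≤ n) (hd : 1 ≤ d)
    (y : Fin n → ℝ) (hy : ∀ i, y i = 1 ∨ y i = -1)
    (hplus : ∃ i, y i = 1) (hminus : ∃ i, y i = -1)
    (μ : EuclideanSpace ℝ (Fin d)) (hμ : μ ≠ 0)
    (z x : Fin n → EuclideanSpace ℝ (Fin d))
    (hx : ∀ i, x i = y i • μ + z i)
    (g : Fin n → ℝ) (hg : ∀ i, g i = ⟪z i, μ⟫ / ‖μ‖)
    (Iplus Iminus : Finset (Fin n))
    (hIplus : ∀ i, i ∈ Iplus ↔ y i = 1)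
    (hIminus : ∀ i, i ∈ Iminus ↔ y i = -1)
    (gbarPlus gbarMinus : ℝ)
    (hgbarPlus : gbarPlus = (∑ i ∈ Iplus, g i) / (Iplus.card : ℝ))
    (hgbarMinus : gbarMinus = (∑ i ∈ Iminus, g i) / (Iminus.card : ℝ))
    (zbarPlus zbarMinus : EuclideanSpace ℝ (Fin d))
    (hzbarPlus : zbarPlus = ((Iplus.card : ℝ))⁻¹ • ∑ i ∈ Iplus, z i)
    (hzbarMinus : zbarMinus = ((Iminus.card : ℝ))⁻¹ • ∑ i ∈ Iminus, z i)
    (gtil : ℝ) (hgtil : gtil = (gbarPlus - gbarMinus) / 2)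
    (ztil : EuclideanSpace ℝ (Fin d))
    (hztil : ztil = (2 : ℝ)⁻¹ • (zbarPlus - zbarMinus))
    (Pz : EuclideanSpace ℝ (Fin d))
    (hPz : Pz = ztil - (⟪ztil, μ⟫ / ‖μ‖ ^ 2) • μ)
    (β : EuclideanSpace ℝ (Fin d)) (hβ : ‖β‖ ≤ 1) (β₀ : ℝ) :
    (Finset.univ : Finset (Fin n)).inf' ⟨hplus.choose, Finset.mem_univ hplus.choose⟩
        (fun i => y i * (⟪x i, β⟫ + β₀)) ≤
      Real.sqrt ((‖μ‖ + gtil) ^ 2 + ‖Pz‖ ^ 2) := by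
  obtain rfl : x = fun i => y i • μ + z i := funext hx
  obtain rfl : g = fun i => ⟪z i, μ⟫ / ‖μ‖ := funext hg
  subst hPz hzbarPlus hzbarMinus
  exact stmt_18_general (hplus.imp fun i => (hIplus i).mpr) (hminus.imp fun i => (hIminus i).mpr)
    (fun i => (hIplus i).mp) (fun i => (hIminus i).mp) hμ hztil
    (by simp only [hgtil, hgbarPlus, hgbarMinus, halfMeanGap, smul_eq_mul, div_eq_inv_mul]) hβ
    fun i => Finset.inf'_le _ (Finset.mem_univ i)
end
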